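/- arXiv:1103.3195 — 4 statements merged into one kernel-verified Lean document; each statement's English description precedes it below -/
import Mathlib

section
/- (Generalized product rule.) Let m ≥ 1, let G ⊆ ℝ^{m+1} be open, let (f_A)_{A ⊆ {1,…,m}} be a family of continuously differentiable real-valued functions on G, set f = ∑_A f_A · e_A (a Clifford-algebra-valued C¹ function on G), and let g : G → Cl_{0,m} be continuously differentiable. Then on G: D(fg) = (Df)g + f̄(Dg) + 2(∑_{A : |A| ≡ 1,2 (mod 4)} f_A e_A)(∂₀ g) − 2 ∑_{i=1}^m ∑_{A : (i∉A ∧ |A|≡2,3 (mod 4)) ∨ (i∈A ∧ |A|≡0,1 (mod 4))} f_A · conj(e_A) e_i (∂_i g), and D̄(fg) = (D̄f)g + f̄(D̄g) + 2(∑_{A : |A| ≡ 1,2 (mod 4)} f_A e_A)(∂₀ g) + 2 ∑_{i=1}^m ∑_{A : (i∉A ∧ |A|≡2,3 (mod 4)) ∨ (i∈A ∧ |A|≡0,1 (mod 4))} f_A · conj(e_A) e_i (∂_i g), where f̄ = ∑_A f_A · conj(e_A). -/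
noncomputable section
open CliffordAlgebra

/-- The quadratic form `Q(v) = -∑ vᵢ²` on `ℝ^m`. -/
def Q (m : ℕ) : QuadraticForm ℝ (Fin m → ℝ) :=
  QuadraticMap.weightedSumSquares ℝ (fun _ : Fin m => (-1 : ℝ))

/-- The real Clifford algebra `Cl_{0,m}`. -/
abbrev Cl (m : ℕ) := CliffordAlgebra (Q m)

/-- The generators `eᵢ = ι(standard basis vector i)`. -/
def e (m : ℕ) (i : Fin m) : Cl m := ι (Q m) (Pi.single i 1)

/-- Given a linear identification `ψ` of `Cl_{0,m}` with a Euclidean space (which equips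
`Cl_{0,m}` with the structure of a finite-dimensional real normed algebra; the resulting
derivatives do not depend on this choice), `pd m ψ i h z` is the partial derivative of
`h : ℝ^{m+1} → Cl_{0,m}` at `z` in the `i`-th coordinate direction. -/
def pd (m : ℕ) (ψ : Cl m ≃ₗ[ℝ] EuclideanSpace ℝ (Fin (2 ^ m)))
    (i : Fin (m + 1)) (h : (Fin (m + 1) → ℝ) → Cl m) (z : Fin (m + 1) → ℝ) : Cl m :=
  ψ.symm (fderiv ℝ (fun w => ψ (h w)) z (Pi.single i 1))

/-- The generalized Cauchy-Riemann operator `D h = ∂₀ h + ∑ᵢ eᵢ (∂ᵢ h)`. -/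
def Dop (m : ℕ) (ψ : Cl m ≃ₗ[ℝ] EuclideanSpace ℝ (Fin (2 ^ m)))
    (h : (Fin (m + 1) → ℝ) → Cl m) (z : Fin (m + 1) → ℝ) : Cl m :=
  pd m ψ 0 h z + ∑ i : Fin m, e m i * pd m ψ i.succ h z

/-- The conjugate Cauchy-Riemann operator `D̄ h = ∂₀ h - ∑ᵢ eᵢ (∂ᵢ h)`. -/
def Dbar (m : ℕ) (ψ : Cl m ≃ₗ[ℝ] EuclideanSpace ℝ (Fin (2 ^ m)))
    (h : (Fin (m + 1) → ℝ) → Cl m) (z : Fin (m + 1) → ℝ) : Cl m :=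
  pd m ψ 0 h z - ∑ i : Fin m, e m i * pd m ψ i.succ h z

/-- `h` is continuously differentiable (of order `n`) on `G`, as a map into the
finite-dimensional space `Cl_{0,m}`. -/
def ClContDiffOn (m : ℕ) (ψ : Cl m ≃ₗ[ℝ] EuclideanSpace ℝ (Fin (2 ^ m))) (n : ℕ)
    (h : (Fin (m + 1) → ℝ) → Cl m) (G : Set (Fin (m + 1) → ℝ)) : Prop :=
  ContDiffOn ℝ n (fun w => ψ (h w)) G

/-- Clifford conjugation: `conj = reverse ∘ involute`. -/
def conjC {m : ℕ} (a : Cl m) : Cl m := reverse (involute a)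

/-- `e_A`: the product of the generators indexed by `A`, in increasing order of indices. -/
def eA (m : ℕ) (A : Finset (Fin m)) : Cl m := ((A.sort (· ≤ ·)).map (e m)).prod

lemma e_anti (m : ℕ) (i j : Fin m) (h : i ≠ j) : e m i * e m j = -(e m j * e m i) := by
  unfold e
  rw [eq_neg_iff_add_eq_zero, ι_mul_ι_add_swap]
  have : QuadraticMap.polar (Q m) (Pi.single i 1) (Pi.single j 1) = 0 := by
    simp only [QuadraticMap.polar, Q, QuadraticMap.weightedSumSquares_apply, Pi.add_apply,
      ← Finset.sum_sub_distrib]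
    apply Finset.sum_eq_zero
    intro k _
    by_cases h1 : k = i
    · subst h1
      simp [Pi.single_apply, h]
    · simp [Pi.single_apply, h1]
  rw [this, map_zero]

def sg (k : ℕ) : ℝ := if k % 4 = 1 ∨ k % 4 = 2 then -1 else 1

lemma sg_succ (k : ℕ) : sg (k + 1) = (-1) ^ (k + 1) * sg k := by
  unfold sg
  obtain ⟨q, r, hr, rfl⟩ : ∃ q r, r < 4 ∧ k = 4 * q + r :=
    ⟨k / 4, k % 4, Nat.mod_lt _ (by norm_num), by omega⟩
  have h4 : ((-1 : ℝ)) ^ (4 * q) = 1 := by rw [pow_mul]; norm_num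
  interval_cases r <;> simp [pow_succ, h4, Nat.add_assoc, Nat.mul_add_mod]

lemma comm_list (m : ℕ) (i : Fin m) (l : List (Fin m)) (hl : l.Nodup) :
    e m i * (l.map (e m)).prod =
      ((-1 : ℝ) ^ (l.length + if i ∈ l then 1 else 0)) • ((l.map (e m)).prod * e m i) := by
  induction l with
  | nil => simp
  | cons a l ih =>
    have hl' := List.nodup_cons.1 hl
    have ih := ih hl'.2
    simp only [List.map_cons, List.prod_cons, List.length_cons]
    by_cases h : i = a
    · subst h
      rw [if_neg hl'.1] at ih
      rw [if_pos List.mem_cons_self]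
      conv_lhs => rw [ih]
      rw [mul_smul_comm, mul_assoc]
      congr 1
      ring
    · rw [← mul_assoc, e_anti m i a h, neg_mul, mul_assoc, ih, mul_smul_comm, ← neg_smul,
        ← mul_assoc]
      congr 1
      simp only [List.mem_cons, h, false_or]
      ring

lemma conj_list (m : ℕ) (l : List (Fin m)) (hl : l.Nodup) :
    conjC ((l.map (e m)).prod) = sg l.length • (l.map (e m)).prod := by
  induction l with
  | nil => simp [conjC, sg]
  | cons a l ih =>
    have hl' := List.nodup_cons.1 hl
    have ih := ih hl'.2
    have hc := comm_list m a l hl'.2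
    rw [if_neg hl'.1] at hc
    have h1 : conjC (e m a) = - e m a := by simp [conjC, e]
    have h2 : ∀ x y : Cl m, conjC (x * y) = conjC y * conjC x := by
      intro x y; simp [conjC]
    simp only [List.map_cons, List.prod_cons, List.length_cons]
    rw [h2, ih, h1, hc, sg_succ, smul_smul, mul_neg, smul_mul_assoc, ← neg_smul]
    congr 1
    have : ((-1 : ℝ) ^ l.length) * (-1) ^ l.length = 1 := by
      rw [← mul_pow]; norm_num
    rw [add_zero, pow_succ]
    linear_combination (sg l.length) * this

lemma conj_eA (m : ℕ) (A : Finset (Fin m)) : conjC (eA m A) = sg A.card • eA m A := by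
  unfold eA
  rw [conj_list m _ (Finset.sort_nodup _ _), Finset.length_sort]

lemma eA_eq (m : ℕ) (A : Finset (Fin m)) :
    eA m A = conjC (eA m A) +
      (if A.card % 4 = 1 ∨ A.card % 4 = 2 then (2 : ℝ) • eA m A else 0) := by
  rw [conj_eA, sg]
  split_ifs
  · rw [← add_smul]; norm_num
  · simp

lemma e_mul_eA (m : ℕ) (i : Fin m) (A : Finset (Fin m)) :
    e m i * eA m A = conjC (eA m A) * e m i -
      (if (i ∉ A ∧ (A.card % 4 = 2 ∨ A.card % 4 = 3)) ∨
                (i ∈ A ∧ (A.card % 4 = 0 ∨ A.card % 4 = 1))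
       then (2 : ℝ) • (conjC (eA m A) * e m i) else 0) := by
  have hc : e m i * eA m A =
      ((-1 : ℝ) ^ (A.card + if i ∈ A then 1 else 0)) • (eA m A * e m i) := by
    have := comm_list m i (A.sort (· ≤ ·)) (Finset.sort_nodup _ _)
    simpa only [eA, Finset.length_sort, Finset.mem_sort] using this
  rw [hc, conj_eA, sg]
  generalize A.card = k
  obtain ⟨q, r, hr, rfl⟩ : ∃ q r, r < 4 ∧ k = 4 * q + r :=
    ⟨k / 4, k % 4, Nat.mod_lt _ (by norm_num), by omega⟩
  have h4 : ((-1 : ℝ)) ^ (4 * q) = 1 := by rw [pow_mul]; norm_num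
  by_cases hi : i ∈ A <;> interval_cases r <;>
    simp [hi, pow_add, h4, Nat.mul_add_mod] <;> module

lemma fderiv_mul_aux {R E F : Type*} [Ring R] [Algebra ℝ R]
    [NormedAddCommGroup E] [NormedSpace ℝ E] [FiniteDimensional ℝ E]
    [NormedAddCommGroup F] [NormedSpace ℝ F]
    (ψ : R ≃ₗ[ℝ] E) (f g : F → R) (z v : F)
    (hf : DifferentiableAt ℝ (fun w => ψ (f w)) z)
    (hg : DifferentiableAt ℝ (fun w => ψ (g w)) z) :
    ψ.symm (fderiv ℝ (fun w => ψ (f w * g w)) z v) =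
      ψ.symm (fderiv ℝ (fun w => ψ (f w)) z v) * g z +
      f z * ψ.symm (fderiv ℝ (fun w => ψ (g w)) z v) := by
  obtain ⟨C, hC⟩ : ∃ C : E →L[ℝ] E →L[ℝ] E, ∀ x y, C x y = ψ (ψ.symm x * ψ.symm y) :=
    ⟨LinearMap.toContinuousBilinearMap
      (LinearMap.mk₂ ℝ (fun x y => ψ (ψ.symm x * ψ.symm y))
        (by intros; simp [add_mul]) (by intros; simp)
        (by intros; simp [mul_add]) (by intros; simp)), fun x y => rfl⟩
  have h := C.hasFDerivAt_of_bilinear hf.hasFDerivAt hg.hasFDerivAt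
  have h' : (fun w => ψ (f w * g w)) = fun w => C (ψ (f w)) (ψ (g w)) := by
    funext w; simp [hC]
  rw [h', h.fderiv]
  simp [hC, add_comm]

lemma pd_mul (m : ℕ) (ψ : Cl m ≃ₗ[ℝ] EuclideanSpace ℝ (Fin (2 ^ m))) (i : Fin (m + 1))
    (f g : (Fin (m + 1) → ℝ) → Cl m) (z : Fin (m + 1) → ℝ)
    (hf : DifferentiableAt ℝ (fun w => ψ (f w)) z)
    (hg : DifferentiableAt ℝ (fun w => ψ (g w)) z) :
    pd m ψ i (fun w => f w * g w) z = pd m ψ i f z * g z + f z * pd m ψ i g z :=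
  fderiv_mul_aux ψ f g z _ hf hg

/-- Generalized product rule: for `f = ∑_A f_A e_A` with real-valued `C¹` coefficients and
a `C¹` function `g` on the open set `G ⊆ ℝ^{m+1}`, with `f̄ = ∑_A f_A conj(e_A)`, on `G`:
`D(fg) = (Df)g + f̄(Dg) + 2(∑_{|A|≡1,2 (4)} f_A e_A)(∂₀g)
        - 2 ∑ᵢ ∑_{(i∉A ∧ |A|≡2,3 (4)) ∨ (i∈A ∧ |A|≡0,1 (4))} f_A conj(e_A) eᵢ (∂ᵢ g)`, and
`D̄(fg) = (D̄f)g + f̄(D̄g) + 2(∑_{|A|≡1,2 (4)} f_A e_A)(∂₀g)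
        + 2 ∑ᵢ ∑_{(i∉A ∧ |A|≡2,3 (4)) ∨ (i∈A ∧ |A|≡0,1 (4))} f_A conj(e_A) eᵢ (∂ᵢ g)`. -/
theorem generalized_product_rule (m : ℕ) (hm : 1 ≤ m)
    (ψ : Cl m ≃ₗ[ℝ] EuclideanSpace ℝ (Fin (2 ^ m)))
    (G : Set (Fin (m + 1) → ℝ)) (hG : IsOpen G)
    (fA : Finset (Fin m) → (Fin (m + 1) → ℝ) → ℝ)
    (hfA : ∀ A, ContDiffOn ℝ 1 (fA A) G)
    (f fbar : (Fin (m + 1) → ℝ) → Cl m)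
    (hf : ∀ z, f z = ∑ A : Finset (Fin m), fA A z • eA m A)
    (hfbar : ∀ z, fbar z = ∑ A : Finset (Fin m), fA A z • conjC (eA m A))
    (g : (Fin (m + 1) → ℝ) → Cl m) (hg : ClContDiffOn m ψ 1 g G) :
    ∀ z ∈ G,
      Dop m ψ (fun w => f w * g w) z =
        Dop m ψ f z * g z + fbar z * Dop m ψ g z +
          (2 : ℝ) • ((∑ A ∈ Finset.univ.filter
              (fun A : Finset (Fin m) => A.card % 4 = 1 ∨ A.card % 4 = 2),
              fA A z • eA m A) * pd m ψ 0 g z) -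
          (2 : ℝ) • ∑ i : Fin m, ∑ A ∈ Finset.univ.filter
              (fun A : Finset (Fin m) =>
                (i ∉ A ∧ (A.card % 4 = 2 ∨ A.card % 4 = 3)) ∨
                (i ∈ A ∧ (A.card % 4 = 0 ∨ A.card % 4 = 1))),
              fA A z • (conjC (eA m A) * (e m i * pd m ψ i.succ g z)) ∧
      Dbar m ψ (fun w => f w * g w) z =
        Dbar m ψ f z * g z + fbar z * Dbar m ψ g z +
          (2 : ℝ) • ((∑ A ∈ Finset.univ.filter
              (fun A : Finset (Fin m) => A.card % 4 = 1 ∨ A.card % 4 = 2),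
              fA A z • eA m A) * pd m ψ 0 g z) +
          (2 : ℝ) • ∑ i : Fin m, ∑ A ∈ Finset.univ.filter
              (fun A : Finset (Fin m) =>
                (i ∉ A ∧ (A.card % 4 = 2 ∨ A.card % 4 = 3)) ∨
                (i ∈ A ∧ (A.card % 4 = 0 ∨ A.card % 4 = 1))),
              fA A z • (conjC (eA m A) * (e m i * pd m ψ i.succ g z)) := by
  intro z hz
  have hfd : DifferentiableAt ℝ (fun w => ψ (f w)) z := by
    have : (fun w => ψ (f w)) = fun w => ∑ A : Finset (Fin m), fA A w • ψ (eA m A) := by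
      funext w; simp [hf]
    rw [this]
    refine DifferentiableAt.fun_sum fun A _ => ?_
    exact (((hfA A).differentiableOn (by norm_num)).differentiableAt
      (hG.mem_nhds hz)).smul_const _
  have hgd : DifferentiableAt ℝ (fun w => ψ (g w)) z :=
    (ContDiffOn.differentiableOn hg (by norm_num)).differentiableAt (hG.mem_nhds hz)
  have h0 : ∀ x : Cl m, f z * x = fbar z * x +
      (2 : ℝ) • ((∑ A ∈ Finset.univ.filter
        (fun A : Finset (Fin m) => A.card % 4 = 1 ∨ A.card % 4 = 2), fA A z • eA m A) * x) := by
    intro x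
    rw [← smul_mul_assoc, ← add_mul, hf, hfbar, Finset.smul_sum, Finset.sum_filter,
      ← Finset.sum_add_distrib]
    congr 1
    refine Finset.sum_congr rfl fun A _ => ?_
    conv_lhs => rw [eA_eq]
    split_ifs <;> module
  have hi : ∀ (i : Fin m) (x : Cl m), e m i * (f z * x) = fbar z * (e m i * x) -
      (2 : ℝ) • ∑ A ∈ Finset.univ.filter
              (fun A : Finset (Fin m) =>
                (i ∉ A ∧ (A.card % 4 = 2 ∨ A.card % 4 = 3)) ∨
                (i ∈ A ∧ (A.card % 4 = 0 ∨ A.card % 4 = 1))),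
              fA A z • (conjC (eA m A) * (e m i * x)) := by
    intro i x
    rw [hf, hfbar, Finset.smul_sum, Finset.sum_filter, Finset.sum_mul, Finset.sum_mul,
      Finset.mul_sum, ← Finset.sum_sub_distrib]
    refine Finset.sum_congr rfl fun A _ => ?_
    rw [smul_mul_assoc, mul_smul_comm, ← mul_assoc, e_mul_eA, sub_mul, smul_mul_assoc,
      mul_assoc]
    split_ifs
    · rw [smul_mul_assoc, mul_assoc]; module
    · simp
  have hs : ∑ i : Fin m, e m i * pd m ψ i.succ (fun w => f w * g w) z =
      (∑ i : Fin m, e m i * pd m ψ i.succ f z) * g z +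
      fbar z * (∑ i : Fin m, e m i * pd m ψ i.succ g z) -
      (2 : ℝ) • ∑ i : Fin m, ∑ A ∈ Finset.univ.filter
              (fun A : Finset (Fin m) =>
                (i ∉ A ∧ (A.card % 4 = 2 ∨ A.card % 4 = 3)) ∨
                (i ∈ A ∧ (A.card % 4 = 0 ∨ A.card % 4 = 1))),
              fA A z • (conjC (eA m A) * (e m i * pd m ψ i.succ g z)) := by
    rw [Finset.sum_mul, Finset.mul_sum, Finset.smul_sum, ← Finset.sum_add_distrib,
      ← Finset.sum_sub_distrib]
    refine Finset.sum_congr rfl fun i _ => ?_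
    rw [pd_mul m ψ _ f g z hfd hgd, mul_add, hi, mul_assoc]
    abel
  unfold Dop Dbar
  rw [hs, pd_mul m ψ _ f g z hfd hgd, h0]
  constructor
  · rw [add_mul, mul_add]; abel
  · rw [sub_mul, mul_sub]; abel
end
end

section
/- (Monogenicity of the Cauchy kernel.) Let m ≥ 1 and define E : ℝ^{m+1} \ {0} → Cl_{0,m} by E(z) = ‖z‖^{−(m+1)} · p̄(z), where p̄(z) = z₀·1 − ∑_{i=1}^m z_i e_i and ‖z‖ is the Euclidean norm of z ∈ ℝ^{m+1}. Then E is left monogenic on ℝ^{m+1} \ {0}, i.e. D E = 0 there. -/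
noncomputable section
open CliffordAlgebra

/-- The conjugate paravector `p̄(z) = z₀·1 - ∑ᵢ zᵢ eᵢ` of `z ∈ ℝ^{m+1}`. -/
def pbar (m : ℕ) (z : Fin (m + 1) → ℝ) : Cl m :=
  algebraMap ℝ (Cl m) (z 0) - ∑ i : Fin m, z i.succ • e m i

/-- The conjugate paravector map as a linear map. -/
def pbarLin (m : ℕ) : (Fin (m + 1) → ℝ) →ₗ[ℝ] Cl m where
  toFun := pbar m
  map_add' x y := by
    simp only [pbar, Pi.add_apply, map_add, add_smul, Finset.sum_add_distrib]
    abel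
  map_smul' c x := by
    simp only [pbar, Pi.smul_apply, smul_eq_mul, RingHom.id_apply, smul_sub, Finset.smul_sum,
      Algebra.algebraMap_eq_smul_one, mul_smul]

lemma sum_smul_e (m : ℕ) (v : Fin m → ℝ) : ∑ i, v i • e m i = ι (Q m) v := by
  simp only [e, ← map_smul, ← map_sum]
  congr 1
  ext j
  simp [Finset.sum_apply, Pi.single_apply]

lemma e_sq (m : ℕ) (i : Fin m) : e m i * e m i = -1 := by
  have h : Q m (Pi.single i 1) = -1 := by
    simp [Q, QuadraticMap.weightedSumSquares_apply, Pi.single_apply]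
  rw [e, ι_sq_scalar, h, map_neg, map_one]

lemma para_mul_pbar (m : ℕ) (z : Fin (m + 1) → ℝ) :
    (algebraMap ℝ (Cl m) (z 0) + ∑ i : Fin m, z i.succ • e m i) * pbar m z
      = algebraMap ℝ (Cl m) (∑ j, z j ^ 2) := by
  rw [pbar, sum_smul_e m (fun i => z i.succ)]
  have h := ι_sq_scalar (Q m) (fun i => z i.succ)
  have hc := Algebra.commutes (z 0) (ι (Q m) (fun i => z i.succ))
  rw [add_mul, mul_sub, mul_sub, h, hc, Fin.sum_univ_succ, map_add, ← map_mul]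
  have : Q m (fun i => z i.succ) = - ∑ i : Fin m, z i.succ ^ 2 := by
    simp [Q, QuadraticMap.weightedSumSquares_apply, pow_two]
  rw [this, map_neg, pow_two]
  abel

lemma pbar_single_zero (m : ℕ) : pbar m (Pi.single 0 1) = 1 := by
  simp [pbar]

lemma pbar_single_succ (m : ℕ) (i : Fin m) : pbar m (Pi.single i.succ 1) = - e m i := by
  simp [pbar, Pi.single_apply]

lemma hasDerivAt_g (m : ℕ) (t : ℝ) (ht : 0 < t) :
    HasDerivAt (fun t => (Real.sqrt t)⁻¹ ^ (m + 1))
      (-((m + 1 : ℝ) / 2) * (Real.sqrt t)⁻¹ ^ (m + 3)) t := by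
  have hs : Real.sqrt t ≠ 0 := (Real.sqrt_pos.2 ht).ne'
  refine (((Real.hasDerivAt_sqrt ht.ne').fun_inv hs).fun_pow (m + 1)).congr_deriv ?_
  have h3 : (Real.sqrt t)⁻¹ ^ (m + 3) = (Real.sqrt t)⁻¹ ^ m * (Real.sqrt t)⁻¹ ^ 3 := pow_add _ _ _
  rw [h3, Nat.add_sub_cancel]
  generalize (Real.sqrt t)⁻¹ ^ m = a
  push_cast
  field_simp

lemma hasFDerivAt_N (m : ℕ) (z : Fin (m + 1) → ℝ) :
    HasFDerivAt (fun w : Fin (m + 1) → ℝ => ∑ j, w j ^ 2)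
      (∑ j, (2 * z j) • ContinuousLinearMap.proj (R := ℝ) (φ := fun _ : Fin (m + 1) => ℝ) j) z := by
  apply HasFDerivAt.fun_sum
  intro j _
  have h0 : HasFDerivAt (fun w : Fin (m + 1) → ℝ => w j)
      (ContinuousLinearMap.proj (R := ℝ) (φ := fun _ : Fin (m + 1) => ℝ) j) z :=
    hasFDerivAt_apply j z
  have h := (hasDerivAt_pow 2 (z j)).comp_hasFDerivAt z h0
  refine HasFDerivAt.congr_fderiv h ?_
  ext v
  simp

lemma pd_formula (m : ℕ)
    (ψ : Cl m ≃ₗ[ℝ] EuclideanSpace ℝ (Fin (2 ^ m)))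
    (E : (Fin (m + 1) → ℝ) → Cl m)
    (hE : ∀ z, E z = ((Real.sqrt (∑ j, z j ^ 2))⁻¹ ^ (m + 1)) • pbar m z)
    (z : Fin (m + 1) → ℝ) (hz : 0 < ∑ j, z j ^ 2) (i : Fin (m + 1)) :
    pd m ψ i E z = ((Real.sqrt (∑ j, z j ^ 2))⁻¹ ^ (m + 1)) • pbar m (Pi.single i 1)
      + (-(m + 1 : ℝ) * (Real.sqrt (∑ j, z j ^ 2))⁻¹ ^ (m + 3)) • z i • pbar m z := by
  have hL : HasFDerivAt (fun w => ψ (pbar m w))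
      (LinearMap.toContinuousLinearMap (ψ.toLinearMap ∘ₗ pbarLin m)) z :=
    (LinearMap.toContinuousLinearMap (ψ.toLinearMap ∘ₗ pbarLin m)).hasFDerivAt
  have hc := (hasDerivAt_g m _ hz).comp_hasFDerivAt z (hasFDerivAt_N m z)
  have h := hc.fun_smul hL
  have hfun : (fun w => ψ (E w)) = fun w =>
      ((fun t => (Real.sqrt t)⁻¹ ^ (m + 1)) ∘ fun w : Fin (m + 1) → ℝ => ∑ j, w j ^ 2) w
        • ψ (pbar m w) := by
    funext w
    rw [hE, map_smul]
    rfl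
  rw [pd, hfun, h.fderiv]
  have hp : pbarLin m (Pi.single i 1) = pbar m (Pi.single i 1) := rfl
  have hsum : (∑ j, (2 * z j) • ContinuousLinearMap.proj (R := ℝ)
      (φ := fun _ : Fin (m + 1) => ℝ) j) (Pi.single i 1) = 2 * z i := by
    simp [Pi.single_apply]
  simp only [add_apply, smul_apply,
    ContinuousLinearMap.smulRight_apply, hsum, map_add, map_smul, Function.comp_apply,
    LinearMap.coe_toContinuousLinearMap', LinearMap.comp_apply, LinearEquiv.coe_coe,
    LinearEquiv.symm_apply_apply, hp, smul_smul, smul_eq_mul]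
  congr 2
  ring

/-- Monogenicity of the Cauchy kernel: `E(z) = ‖z‖^{-(m+1)} p̄(z)` (with `‖·‖` the Euclidean
norm) is left monogenic on `ℝ^{m+1} \ {0}`. -/
theorem cauchy_kernel_monogenic (m : ℕ) (hm : 1 ≤ m)
    (ψ : Cl m ≃ₗ[ℝ] EuclideanSpace ℝ (Fin (2 ^ m)))
    (E : (Fin (m + 1) → ℝ) → Cl m)
    (hE : ∀ z, E z = ((Real.sqrt (∑ j, z j ^ 2))⁻¹ ^ (m + 1)) • pbar m z) :
    ∀ z : Fin (m + 1) → ℝ, z ≠ 0 → Dop m ψ E z = 0 := by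
  intro z hz
  have hN : 0 < ∑ j, z j ^ 2 := by
    obtain ⟨j, hj⟩ := Function.ne_iff.1 hz
    exact Finset.sum_pos' (fun _ _ => sq_nonneg _) ⟨j, Finset.mem_univ _, by
      have : z j ≠ 0 := hj
      positivity⟩
  have hmul := para_mul_pbar m z
  simp only [Dop, pd_formula m ψ E hE z hN, pbar_single_zero, pbar_single_succ]
  set c := (Real.sqrt (∑ j, z j ^ 2))⁻¹ ^ (m + 1) with hc
  set k := -(m + 1 : ℝ) * (Real.sqrt (∑ j, z j ^ 2))⁻¹ ^ (m + 3) with hk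
  have hck : k * ∑ j, z j ^ 2 = -(m + 1 : ℝ) * c := by
    have hs : Real.sqrt (∑ j, z j ^ 2) ≠ 0 := (Real.sqrt_pos.2 hN).ne'
    have h2 : ∑ j, z j ^ 2 = Real.sqrt (∑ j, z j ^ 2) ^ 2 := (Real.sq_sqrt hN.le).symm
    rw [hk, hc]
    generalize Real.sqrt (∑ j, z j ^ 2) = s at *
    rw [h2, pow_add _ m 3, pow_add _ m 1]
    generalize s⁻¹ ^ m = a
    field_simp
  clear_value c k
  have key : c • (1 : Cl m) + k • z 0 • pbar m z
      + ∑ i : Fin m, e m i * (c • (-e m i) + k • z i.succ • pbar m z)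
      = (c * (m + 1)) • (1 : Cl m)
        + k • ((algebraMap ℝ (Cl m) (z 0) + ∑ i : Fin m, z i.succ • e m i) * pbar m z) := by
    simp only [mul_add, mul_smul_comm, mul_neg, e_sq, neg_neg, Finset.sum_add_distrib,
      Finset.sum_const, Finset.card_univ, Fintype.card_fin, add_mul, Finset.sum_mul,
      smul_mul_assoc, smul_add, Finset.smul_sum, Algebra.algebraMap_eq_smul_one, one_mul,
      mul_one, add_smul]
    rw [mul_comm c (m : ℝ), mul_smul (m : ℝ) c, Nat.cast_smul_eq_nsmul]
    abel
  rw [key, hmul, Algebra.algebraMap_eq_smul_one, smul_smul, ← add_smul, hck]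
  have : c * (m + 1) + -(m + 1 : ℝ) * c = 0 := by ring
  rw [this, zero_smul]
end
end

section
/- (Unique nearest boundary point near a C² boundary.) Let n ≥ 1 and let U ⊆ ℝⁿ be a nonempty bounded open set with C² boundary, in the sense that there is a twice continuously differentiable function φ : ℝⁿ → ℝ with U = {x : φ(x) < 0}, frontier U = {x : φ(x) = 0}, and the derivative of φ nonvanishing at every point of frontier U. Then there exists an open set W ⊆ ℝⁿ containing frontier U such that for every z ∈ U ∩ W there is a unique point P ∈ frontier U with ‖z − P‖ = infDist(z, frontier U), i.e. a unique point of frontier U of shortest Euclidean distance to z. -/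
/-- Unique nearest boundary point near a `C²` boundary: if `U ⊆ ℝⁿ` is a nonempty bounded
open set with `C²` boundary (given by a `C²` defining function `φ` with `U = {φ < 0}`,
`frontier U = {φ = 0}` and nonvanishing derivative on `frontier U`), then there is an open
neighbourhood `W` of `frontier U` such that every `z ∈ U ∩ W` has a unique nearest point
`P ∈ frontier U` (for the Euclidean distance). -/
theorem unique_nearest_boundary_point (n : ℕ) (hn : 1 ≤ n)
    (U : Set (EuclideanSpace ℝ (Fin n))) (hne : U.Nonempty)
    (hU : IsOpen U) (hUb : Bornology.IsBounded U)
    (φ : EuclideanSpace ℝ (Fin n) → ℝ) (hφ : ContDiff ℝ 2 φ)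
    (hUφ : U = {x | φ x < 0})
    (hfr : frontier U = {x | φ x = 0})
    (hgrad : ∀ x ∈ frontier U, fderiv ℝ φ x ≠ 0) :
    ∃ W : Set (EuclideanSpace ℝ (Fin n)), IsOpen W ∧ frontier U ⊆ W ∧
      ∀ z ∈ U ∩ W, ∃! P, P ∈ frontier U ∧ dist z P = Metric.infDist z (frontier U) := by
  have hloc : ∀ p ∈ frontier U, ∃ δ > 0, ∀ z ∈ Metric.ball p δ,
      ∀ P ∈ frontier U, dist z P = Metric.infDist z (frontier U) →
      ∀ Q ∈ frontier U, dist z Q = Metric.infDist z (frontier U) → Q = P := by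
    intro p hp
    have hd1 : ContDiff ℝ 1 (fderiv ℝ φ) := hφ.fderiv_right (by norm_num)
    have hdiff : Differentiable ℝ φ := hφ.differentiable (by norm_num)
    obtain ⟨K, t, ht, hK⟩ := hd1.contDiffAt (x := p).exists_lipschitzOnWith
    have hm : 0 < ‖fderiv ℝ φ p‖ := norm_pos_iff.mpr (hgrad p hp)
    set m := ‖fderiv ℝ φ p‖ / 2 with hmdef
    have hm0 : 0 < m := by positivity
    have hnear : ∀ᶠ x in nhds p, m < ‖fderiv ℝ φ x‖ :=
      (hd1.continuous.norm.tendsto p).eventually (lt_mem_nhds (by rw [hmdef]; linarith))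
    obtain ⟨ε, hε, hball⟩ := Metric.mem_nhds_iff.mp (Filter.inter_mem ht hnear)
    have hK0 : (0 : ℝ) ≤ K := K.2
    refine ⟨min (ε / 2) (m / (2 * K + 1)), by positivity, ?_⟩
    intro z hz P hP hzP Q hQ hzQ
    have hz' : dist z p < min (ε / 2) (m / (2 * K + 1)) := hz
    have hz1 := lt_of_lt_of_le hz' (min_le_left _ _)
    have hz2 := lt_of_lt_of_le hz' (min_le_right _ _)
    have hle : Metric.infDist z (frontier U) ≤ dist z p := Metric.infDist_le_dist_of_mem hp
    have hPb : P ∈ Metric.ball p ε := by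
      have := dist_triangle_left P p z
      rw [Metric.mem_ball]; linarith
    have hQb : Q ∈ Metric.ball p ε := by
      have := dist_triangle_left Q p z
      rw [Metric.mem_ball]; linarith
    -- Lagrange multiplier at `P`
    have hmin : IsLocalExtrOn (fun x => ‖x - z‖ ^ 2) {x | φ x = φ P} P := by
      left
      have hφP : φ P = 0 := by rw [hfr] at hP; exact hP
      refine Filter.eventually_of_mem self_mem_nhdsWithin ?_
      intro x hx
      have hx' : x ∈ frontier U := by
        rw [hfr]; exact (show φ x = φ P from hx).trans hφP
      have h1 : dist z P ≤ dist z x := hzP ▸ Metric.infDist_le_dist_of_mem hx'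
      rw [dist_comm z P, dist_comm z x, dist_eq_norm, dist_eq_norm] at h1
      show ‖P - z‖ ^ 2 ≤ ‖x - z‖ ^ 2
      gcongr
    have hs1 : HasStrictFDerivAt φ (fderiv ℝ φ P) P :=
      hφ.contDiffAt.hasStrictFDerivAt (by norm_num)
    have hs2 : HasStrictFDerivAt (fun x => ‖x - z‖ ^ 2) (2 • innerSL ℝ (P - z)) P := by
      have h := (hasStrictFDerivAt_norm_sq (P - z)).comp P
        ((hasStrictFDerivAt_id P).sub_const z)
      simpa using h
    obtain ⟨a, b, hab, habeq⟩ := hmin.exists_multipliers_of_hasStrictFDerivAt_1d hs1 hs2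
    have hb : b ≠ 0 := by
      rintro rfl
      have ha : a ≠ 0 := by
        rintro rfl
        exact hab rfl
      simp [ha] at habeq
      exact hgrad P hP habeq
    obtain ⟨s, hs⟩ : ∃ s : ℝ, innerSL ℝ (z - P) = s • fderiv ℝ φ P := by
      refine ⟨a / (2 * b), ?_⟩
      ext v
      have h := congrArg (fun l => l v) habeq
      simp [inner_sub_left] at h ⊢
      field_simp
      linarith
    have hnorm : dist z P = |s| * ‖fderiv ℝ φ P‖ := by
      rw [dist_eq_norm, ← innerSL_apply_norm ℝ (z - P), hs, norm_smul, Real.norm_eq_abs]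
    have hmP : m < ‖fderiv ℝ φ P‖ := (hball hPb).2
    have hsK : |s| * (2 * K + 1) < 1 := by
      have h1 : |s| * m < m / (2 * K + 1) := by
        have : |s| * m ≤ |s| * ‖fderiv ℝ φ P‖ := by gcongr
        linarith
      rw [lt_div_iff₀ (by positivity)] at h1
      by_contra hcon
      push Not at hcon
      nlinarith
    -- Taylor
    have hT : |fderiv ℝ φ P (Q - P)| ≤ (K * ‖Q - P‖) * ‖Q - P‖ := by
      have h := (convex_segment P Q).norm_image_sub_le_of_norm_fderiv_le' (𝕜 := ℝ) (f := φ)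
        (φ := fderiv ℝ φ P) (C := K * ‖Q - P‖) (fun x _ => hdiff x) (fun x hx => by
          have hxb : x ∈ Metric.ball p ε := (convex_ball p ε).segment_subset hPb hQb hx
          have h2 := hK.dist_le_mul x (hball hxb).1 P (hball hPb).1
          rw [dist_eq_norm, dist_eq_norm] at h2
          refine h2.trans ?_
          gcongr
          have := norm_sub_le_of_mem_segment hx
          simpa [norm_sub_rev] using this) (left_mem_segment ℝ P Q) (right_mem_segment ℝ P Q)
      have hφP : φ P = 0 := by rw [hfr] at hP; exact hP
      have hφQ : φ Q = 0 := by rw [hfr] at hQ; exact hQ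
      rw [hφP, hφQ] at h
      simpa only [sub_zero, zero_sub, norm_neg, Real.norm_eq_abs] using h
    have heq : ‖Q - P‖ ^ 2 = 2 * (s * fderiv ℝ φ P (Q - P)) := by
      have h1 : inner ℝ (z - P) (Q - P) = s * fderiv ℝ φ P (Q - P) := by
        have h := congrArg (fun l => l (Q - P)) hs
        simpa only [innerSL_apply_apply, ContinuousLinearMap.smul_apply, smul_eq_mul] using h
      have h2 := norm_sub_sq_real (z - P) (Q - P)
      have h3 : ‖z - P - (Q - P)‖ = ‖z - P‖ := by
        rw [sub_sub_sub_cancel_right, ← dist_eq_norm, ← dist_eq_norm, hzP, hzQ]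
      rw [h3, h1] at h2
      linarith
    by_contra hne'
    have hpos : 0 < ‖Q - P‖ := norm_pos_iff.mpr (sub_ne_zero.mpr hne')
    have h4 : s * fderiv ℝ φ P (Q - P) ≤ |s| * ((K * ‖Q - P‖) * ‖Q - P‖) := by
      refine (le_abs_self _).trans ?_
      rw [abs_mul]
      gcongr
    have h5 : |s| * (2 * K) < 1 := by nlinarith [abs_nonneg s]
    have h6 : 0 < ‖Q - P‖ ^ 2 := by positivity
    nlinarith
  choose! δ hδ hδu using hloc
  refine ⟨⋃ p ∈ frontier U, Metric.ball p (δ p),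
    isOpen_biUnion fun _ _ => Metric.isOpen_ball,
    fun p hp => Set.mem_biUnion hp (Metric.mem_ball_self (hδ p hp)), ?_⟩
  rintro z ⟨-, hz⟩
  obtain ⟨p, hp, hzp⟩ := Set.mem_iUnion₂.mp hz
  obtain ⟨P, hP, hPd⟩ := (isClosed_frontier (s := U)).exists_infDist_eq_dist ⟨p, hp⟩ z
  exact ⟨P, ⟨hP, hPd.symm⟩, fun Q hQ => hδu p hp z hzp P hP hPd.symm Q hQ.1 hQ.2⟩
end

section
/- (Uniform interior and exterior tangent discs.) Let U ⊆ ℂ be a nonempty bounded open set with C² boundary, in the sense that there is a twice continuously differentiable function φ : ℂ → ℝ with U = {x : φ(x) < 0}, frontier U = {x : φ(x) = 0}, and the derivative of φ nonvanishing at every point of frontier U. Then there exists r₀ > 0 such that for every P ∈ frontier U there exist points C, C' ∈ ℂ with: dist(C, P) = r₀ and the closed disc of radius r₀ centred at C meets the closure of U exactly in {P} (an externally tangent disc), and dist(C', P) = r₀, the closed disc of radius r₀ centred at C' is contained in the closure of U, and it meets frontier U exactly in {P} (an internally tangent disc). -/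
lemma utd_taylor (φ : ℂ → ℝ) (hφ : ContDiff ℝ 2 φ) (R : ℝ) :
    ∃ L : ℝ, 0 < L ∧ ∀ P y : ℂ, ‖P‖ ≤ R → ‖y - P‖ ≤ 1 →
      |φ y - φ P - fderiv ℝ φ P (y - P)| ≤ L * ‖y - P‖ ^ 2 := by
  have h1 : ContDiff ℝ 1 (fderiv ℝ φ) := hφ.fderiv_right (by norm_num)
  have h2 : Continuous (fderiv ℝ (fderiv ℝ φ)) := h1.continuous_fderiv (by norm_num)
  obtain ⟨L, hL⟩ := (isCompact_closedBall (0 : ℂ) (R + 1)).exists_bound_of_continuousOn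
    (f := fderiv ℝ (fderiv ℝ φ))
    h2.continuousOn
  refine ⟨max L 1, by positivity, fun P y hP hy => ?_⟩
  have hsub : Metric.closedBall P ‖y - P‖ ⊆ Metric.closedBall (0 : ℂ) (R + 1) := by
    intro z hz
    rw [mem_closedBall_iff_norm] at hz
    rw [mem_closedBall_zero_iff]
    have := norm_add_le (z - P) P
    rw [sub_add_cancel] at this
    linarith
  have hPm : P ∈ Metric.closedBall P ‖y - P‖ := Metric.mem_closedBall_self (norm_nonneg _)
  have hym : y ∈ Metric.closedBall P ‖y - P‖ := by rw [mem_closedBall_iff_norm]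
  have hb : ∀ z ∈ Metric.closedBall P ‖y - P‖,
      ‖fderiv ℝ φ z - fderiv ℝ φ P‖ ≤ max L 1 * ‖y - P‖ := by
    intro z hz
    have h := Convex.norm_image_sub_le_of_norm_fderiv_le (𝕜 := ℝ) (f := fderiv ℝ φ)
      (C := max L 1) (s := Metric.closedBall P ‖y - P‖)
      (fun x _ => (h1.differentiable (by norm_num)) x)
      (fun x hx => (hL x (hsub hx)).trans (le_max_left _ _))
      (convex_closedBall _ _) hPm hz
    refine h.trans ?_
    rw [mem_closedBall_iff_norm] at hz
    gcongr
  have h := Convex.norm_image_sub_le_of_norm_fderiv_le' (𝕜 := ℝ) (f := φ)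
      (fun x _ => (hφ.differentiable (by norm_num)) x) hb
      (convex_closedBall _ _) hPm hym
  rw [Real.norm_eq_abs] at h
  refine h.trans (le_of_eq (by ring))

/-- A point of the disc tangent at `P` with unit normal `n`. -/
lemma utd_ball (n v : ℂ) (r : ℝ) (hn : ‖n‖ = 1) (h : ‖v - r • n‖ ≤ r) :
    ‖v‖ ^ 2 ≤ 2 * r * inner ℝ n v ∧ ‖v‖ ≤ 2 * r := by
  have hr : 0 ≤ r := (norm_nonneg _).trans h
  have h2 : ‖v - r • n‖ ^ 2 ≤ r ^ 2 := by gcongr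
  rw [norm_sub_sq_real, inner_smul_right, real_inner_comm, norm_smul, hn, mul_one,
    Real.norm_eq_abs, sq_abs] at h2
  refine ⟨by linarith, ?_⟩
  have h3 := norm_sub_norm_le v (r • n)
  rw [norm_smul, hn, Real.norm_eq_abs, abs_of_nonneg hr] at h3
  linarith

/-- Uniform interior and exterior tangent discs: if `U ⊆ ℂ` is a nonempty bounded open set
with `C²` boundary (given by a `C²` defining function `φ` with `U = {φ < 0}`,
`frontier U = {φ = 0}` and nonvanishing derivative on `frontier U`), then there is an
`r₀ > 0` such that every boundary point `P` admits an externally tangent closed disc of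
radius `r₀` meeting `closure U` exactly in `{P}`, and an internally tangent closed disc of
radius `r₀` contained in `closure U` and meeting `frontier U` exactly in `{P}`. -/
theorem uniform_tangent_discs (U : Set ℂ) (hne : U.Nonempty)
    (hU : IsOpen U) (hUb : Bornology.IsBounded U)
    (φ : ℂ → ℝ) (hφ : ContDiff ℝ 2 φ)
    (hUφ : U = {x | φ x < 0})
    (hfr : frontier U = {x | φ x = 0})
    (hgrad : ∀ x ∈ frontier U, fderiv ℝ φ x ≠ 0) :
    ∃ r₀ : ℝ, 0 < r₀ ∧ ∀ P ∈ frontier U,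
      (∃ C : ℂ, dist C P = r₀ ∧ Metric.closedBall C r₀ ∩ closure U = {P}) ∧
      (∃ C' : ℂ, dist C' P = r₀ ∧ Metric.closedBall C' r₀ ⊆ closure U ∧
        Metric.closedBall C' r₀ ∩ frontier U = {P}) := by
  have hcl : closure U = {x | φ x ≤ 0} := by
    rw [closure_eq_self_union_frontier, hfr, hUφ]
    ext x
    simp [le_iff_lt_or_eq]
  have hK : IsCompact (frontier U) :=
    Metric.isCompact_of_isClosed_isBounded isClosed_frontier
      (hUb.closure.subset frontier_subset_closure)
  rcases (frontier U).eq_empty_or_nonempty with he | hKne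
  · exact ⟨1, one_pos, by simp [he]⟩
  have hc1 : Continuous (fderiv ℝ φ) := hφ.continuous_fderiv (by norm_num)
  obtain ⟨Q, hQ, hmin⟩ := hK.exists_isMinOn hKne (f := fun x => ‖fderiv ℝ φ x‖)
    hc1.norm.continuousOn
  set m := ‖fderiv ℝ φ Q‖ with hm
  have hmpos : 0 < m := norm_pos_iff.2 (hgrad Q hQ)
  obtain ⟨R, hR⟩ := hK.isBounded.exists_norm_le
  obtain ⟨L, hLpos, hT⟩ := utd_taylor φ hφ R
  have hr : ∃ r : ℝ, 0 < r ∧ 2 * r ≤ 1 ∧ 2 * r * L < m := by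
    refine ⟨min (1 / 2) (m / (4 * L)), by positivity, ?_, ?_⟩
    · have := min_le_left (1 / 2) (m / (4 * L))
      linarith
    · have h := min_le_right (1 / 2) (m / (4 * L))
      have h' : 2 * min (1 / 2) (m / (4 * L)) * L ≤ 2 * (m / (4 * L)) * L := by gcongr
      have : 2 * (m / (4 * L)) * L = m / 2 := by field_simp; norm_num
      linarith
  obtain ⟨r, hrpos, hr1, hrL⟩ := hr
  refine ⟨r, hrpos, fun P hP => ?_⟩
  have hφP : φ P = 0 := by rw [hfr] at hP; exact hP
  have hg : m ≤ ‖fderiv ℝ φ P‖ := hmin hP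
  have hgpos : 0 < ‖fderiv ℝ φ P‖ := hmpos.trans_le hg
  obtain ⟨n, hn, hinner⟩ : ∃ n : ℂ, ‖n‖ = 1 ∧
      ∀ v, fderiv ℝ φ P v = ‖fderiv ℝ φ P‖ * inner ℝ n v := by
    refine ⟨‖fderiv ℝ φ P‖⁻¹ • (InnerProductSpace.toDual ℝ ℂ).symm (fderiv ℝ φ P), ?_, ?_⟩
    · rw [norm_smul, LinearIsometryEquiv.norm_map, norm_inv, norm_norm]
      exact inv_mul_cancel₀ hgpos.ne'
    · intro v
      rw [real_inner_smul_left, InnerProductSpace.toDual_symm_apply]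
      field_simp
  have key : ∀ y i : ℝ, 0 < y → y ^ 2 ≤ 2 * r * i → L * y ^ 2 < ‖fderiv ℝ φ P‖ * i := by
    intro y i hy hyi
    have hy2 : 0 < y ^ 2 := by positivity
    have hi : 0 < i := by
      by_contra hneg
      nlinarith
    calc L * y ^ 2 ≤ L * (2 * r * i) := by gcongr
      _ = (2 * r * L) * i := by ring
      _ < m * i := by gcongr
      _ ≤ _ := by gcongr
  have hext : ∀ y ∈ Metric.closedBall (P + r • n) r, y ≠ P → 0 < φ y := by
    intro y hy hyP
    rw [mem_closedBall_iff_norm, ← sub_sub] at hy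
    obtain ⟨h1, h2⟩ := utd_ball n (y - P) r hn hy
    have h3 := (abs_le.1 (hT P y (hR P hP) (h2.trans hr1))).1
    have h4 := key _ _ (norm_pos_iff.2 (sub_ne_zero.2 hyP)) h1
    rw [hφP, hinner] at h3
    linarith
  have hint : ∀ y ∈ Metric.closedBall (P + r • (-n)) r, y ≠ P → φ y < 0 := by
    intro y hy hyP
    rw [mem_closedBall_iff_norm, ← sub_sub] at hy
    obtain ⟨h1, h2⟩ := utd_ball (-n) (y - P) r (by rw [norm_neg, hn]) hy
    have h3 := (abs_le.1 (hT P y (hR P hP) (h2.trans hr1))).2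
    have h4 := key _ _ (norm_pos_iff.2 (sub_ne_zero.2 hyP)) h1
    rw [hφP, hinner] at h3
    rw [inner_neg_left] at h4
    linarith
  have hd : ∀ k : ℂ, ‖k‖ = 1 → dist (P + r • k) P = r := by
    intro k hk
    rw [dist_eq_norm, add_sub_cancel_left, norm_smul, hk, Real.norm_eq_abs,
      abs_of_pos hrpos, mul_one]
  have hd1 := hd n hn
  have hd2 := hd (-n) (by rw [norm_neg, hn])
  have hm1 : P ∈ Metric.closedBall (P + r • n) r := by
    rw [Metric.mem_closedBall, dist_comm]; exact hd1.le
  have hm2 : P ∈ Metric.closedBall (P + r • (-n)) r := by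
    rw [Metric.mem_closedBall, dist_comm]; exact hd2.le
  refine ⟨⟨P + r • n, hd1, ?_⟩, P + r • (-n), hd2, ?_, ?_⟩
  · refine Set.Subset.antisymm ?_ ?_
    · rintro y ⟨hy, hyc⟩
      by_contra hne'
      rw [hcl] at hyc
      exact absurd (hext y hy hne') (not_lt.2 hyc)
    · rintro y rfl
      exact ⟨hm1, frontier_subset_closure hP⟩
  · intro y hy
    rw [hcl]
    by_cases hyP : y = P
    · rw [hyP]; exact hφP.le
    · exact (hint y hy hyP).le
  · refine Set.Subset.antisymm ?_ ?_
    · rintro y ⟨hy, hyc⟩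
      by_contra hne'
      rw [hfr] at hyc
      exact (hint y hy hne').ne hyc
    · rintro y rfl
      exact ⟨hm2, hP⟩
end
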